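/- Let t, d ∈ ℕ and a₁, …, a_t ∈ [0, ∞)^d. The best-constant-rebalanced-portfolio objective f_BCRP(x) := −Σ_{i=1}^t log⟨a_i, x⟩ is locally smooth relative to the negative Shannon entropy h(x) := Σ_{j=1}^d x_j log x_j on the probability simplex 𝒫 ⊂ ℝ^d: for every x ∈ 𝒫 with ⟨a_i, x⟩ > 0 for all i, there exist L_x > 0 and ε_x > 0 such that f_BCRP(z₂) ≤ f_BCRP(z₁) + ⟨∇f_BCRP(z₁), z₂ − z₁⟩ + L_x D_h(z₂, z₁) for all z₁, z₂ ∈ B(x, ε_x) ∩ 𝒫 with strictly positive coordinates and ⟨a_i, z_l⟩ > 0 for all i, l. -/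

import Mathlib

open scoped RealInnerProductSpace

/-!
Both Bregman divergences are sums of scalar ones at linear forms: the objective gives the
divergence of `-log` between `⟪aᵢ, z₁⟫` and `⟪aᵢ, z₂⟫`, the entropy gives the divergence of
`u ↦ u log u` between coordinates. The first is at most `(v - u)² / (u v)`, so near a point where
all `⟪aᵢ, x⟫` are positive the divergence of the objective is at most a multiple of
`‖z₂ - z₁‖²`. The second dominates the squared Hellinger term `(√q - √p)²`, hence
`(q - p)² / (4 M)` for `p, q ≤ M`, so the divergence of the entropy is locally at least a multiple
of `‖z₂ - z₁‖²`, with `M = ‖x‖ + 1` on a small ball around `x`.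
-/

section BregmanDivergence

variable {E F : Type*} [NormedAddCommGroup E] [NormedSpace ℝ E]
  [NormedAddCommGroup F] [NormedSpace ℝ F]

/-- The Bregman divergence `D_f(y, x)` of a real function on a normed space, the pairing with the
gradient at `x` being written as an application of the Fréchet derivative. It is meaningful only
where `f` is differentiable at `x`, as `fderiv` is `0` elsewhere. -/
noncomputable def bregmanDiv (f : E → ℝ) (y x : E) : ℝ :=
  f y - f x - fderiv ℝ f x (y - x)

lemma bregmanDiv_eq_deriv (f : ℝ → ℝ) (v u : ℝ) :
    bregmanDiv f v u = f v - f u - deriv f u * (v - u) := by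
  rw [bregmanDiv, fderiv_eq_smul_deriv, smul_eq_mul, mul_comm]

lemma bregmanDiv_comp_continuousLinearMap {f : F → ℝ} (A : E →L[ℝ] F) (y : E) {x : E}
    (hf : DifferentiableAt ℝ f (A x)) :
    bregmanDiv (fun z => f (A z)) y x = bregmanDiv f (A y) (A x) := by
  simp only [bregmanDiv]
  rw [fderiv_fun_comp x hf A.differentiableAt, A.fderiv, ContinuousLinearMap.comp_apply, map_sub]

lemma bregmanDiv_sum {ι : Type*} {s : Finset ι} {f : ι → E → ℝ} (y : E) {x : E}
    (hf : ∀ i ∈ s, DifferentiableAt ℝ (f i) x) :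
    bregmanDiv (fun z => ∑ i ∈ s, f i z) y x = ∑ i ∈ s, bregmanDiv (f i) y x := by
  simp only [bregmanDiv, fderiv_fun_sum hf, sum_apply,
    Finset.sum_sub_distrib]

lemma bregmanDiv_sum_comp_continuousLinearMap {ι : Type*} {s : Finset ι} {φ : ι → F → ℝ}
    (A : ι → E →L[ℝ] F) (y : E) {x : E} (hφ : ∀ i ∈ s, DifferentiableAt ℝ (φ i) (A i x)) :
    bregmanDiv (fun z => ∑ i ∈ s, φ i (A i z)) y x =
      ∑ i ∈ s, bregmanDiv (φ i) (A i y) (A i x) := by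
  rw [bregmanDiv_sum y fun i hi => (hφ i hi).fun_comp' x (A i).differentiableAt]
  exact Finset.sum_congr rfl fun i hi => bregmanDiv_comp_continuousLinearMap (A i) y (hφ i hi)

end BregmanDivergence

section Scalar

open InformationTheory (klFun klFun_apply klFun_zero)

lemma bregmanDiv_neg_log (v u : ℝ) :
    bregmanDiv (fun w => -Real.log w) v u = Real.log u - Real.log v + u⁻¹ * (v - u) := by
  rw [bregmanDiv_eq_deriv, deriv.fun_neg, Real.deriv_log]
  ring

lemma bregmanDiv_neg_log_le {u v : ℝ} (hu : 0 < u) (hv : 0 < v) :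
    bregmanDiv (fun w => -Real.log w) v u ≤ (v - u) ^ 2 / (u * v) := by
  have hlog : 1 - u / v ≤ Real.log v - Real.log u := by
    simpa only [inv_div, Real.log_div hv.ne' hu.ne'] using
      Real.one_sub_inv_le_log_of_pos (div_pos hv hu)
  calc bregmanDiv (fun w => -Real.log w) v u
      = u⁻¹ * (v - u) - (Real.log v - Real.log u) := by rw [bregmanDiv_neg_log]; ring
    _ ≤ u⁻¹ * (v - u) - (1 - u / v) := by gcongr
    _ = (v - u) ^ 2 / (u * v) := by field_simp

lemma bregmanDiv_mul_log (q : ℝ) {p : ℝ} (hp : p ≠ 0) :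
    bregmanDiv (fun w => w * Real.log w) q p =
      q * Real.log q - p * Real.log p - (Real.log p + 1) * (q - p) := by
  rw [bregmanDiv_eq_deriv, Real.deriv_mul_log hp]

lemma bregmanDiv_mul_log_eq_mul_klFun (q : ℝ) {p : ℝ} (hp : p ≠ 0) :
    bregmanDiv (fun w => w * Real.log w) q p = p * klFun (q / p) := by
  rw [bregmanDiv_mul_log q hp]
  rcases eq_or_ne q 0 with rfl | hq
  · rw [zero_div, klFun_zero]
    ring
  · rw [klFun_apply, Real.log_div hq hp]
    field_simp
    ring

lemma sq_sqrt_sub_one_le_klFun {x : ℝ} (hx : 0 ≤ x) : (√x - 1) ^ 2 ≤ klFun x := by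
  have hlog : √x - 1 ≤ √x * Real.log √x := Real.self_sub_one_le_mul_log (Real.sqrt_nonneg x)
  calc (√x - 1) ^ 2 = 2 * √x * (√x - 1) + 1 - √x ^ 2 := by ring
    _ ≤ 2 * √x * (√x * Real.log √x) + 1 - √x ^ 2 := by gcongr
    _ = √x ^ 2 * (2 * Real.log √x) + 1 - √x ^ 2 := by ring
    _ = klFun x := by rw [Real.sq_sqrt hx, Real.log_sqrt hx, klFun_apply]; ring

lemma sq_sqrt_sub_sqrt_le_bregmanDiv_mul_log {p q : ℝ} (hp : 0 < p) (hq : 0 ≤ q) :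
    (√q - √p) ^ 2 ≤ bregmanDiv (fun w => w * Real.log w) q p := by
  have hp' : √p ≠ 0 := (Real.sqrt_pos.2 hp).ne'
  calc (√q - √p) ^ 2 = √p ^ 2 * (√(q / p) - 1) ^ 2 := by
        rw [Real.sqrt_div hq]
        field_simp
    _ = p * (√(q / p) - 1) ^ 2 := by rw [Real.sq_sqrt hp.le]
    _ ≤ p * klFun (q / p) := by gcongr; exact sq_sqrt_sub_one_le_klFun (by positivity)
    _ = _ := (bregmanDiv_mul_log_eq_mul_klFun q hp.ne').symm

lemma sq_sub_le_mul_bregmanDiv_mul_log {p q M : ℝ} (hp : 0 < p) (hq : 0 ≤ q)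
    (hpM : p ≤ M) (hqM : q ≤ M) :
    (q - p) ^ 2 ≤ 4 * M * bregmanDiv (fun w => w * Real.log w) q p := by
  have hM : 0 ≤ M := hq.trans hqM
  calc (q - p) ^ 2 = (√q ^ 2 - √p ^ 2) ^ 2 := by rw [Real.sq_sqrt hq, Real.sq_sqrt hp.le]
    _ = (√q + √p) ^ 2 * (√q - √p) ^ 2 := by ring
    _ ≤ (√M + √M) ^ 2 * (√q - √p) ^ 2 := by gcongr
    _ = 4 * M * (√q - √p) ^ 2 := by linear_combination 4 * (√q - √p) ^ 2 * Real.sq_sqrt hM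
    _ ≤ _ := by gcongr; exact sq_sqrt_sub_sqrt_le_bregmanDiv_mul_log hp hq

end Scalar

section Objective

variable {ι E : Type*} [Fintype ι] [NormedAddCommGroup E] [InnerProductSpace ℝ E]

/-- The best-constant-rebalanced-portfolio objective `f_BCRP` of the return vectors `a i`, on an
arbitrary real inner product space. -/
noncomputable def bcrpObjective (a : ι → E) (z : E) : ℝ :=
  -∑ i, Real.log ⟪a i, z⟫

lemma bregmanDiv_bcrpObjective_eq_sum {a : ι → E} (y : E) {x : E} (hx : ∀ i, ⟪a i, x⟫ ≠ 0) :
    bregmanDiv (bcrpObjective a) y x =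
      ∑ i, bregmanDiv (fun w => -Real.log w) ⟪a i, y⟫ ⟪a i, x⟫ := by
  have hsum : bcrpObjective a = fun z => ∑ i, -Real.log (innerSL ℝ (a i) z) :=
    funext fun z => (Finset.sum_neg_distrib _).symm
  rw [hsum]
  exact bregmanDiv_sum_comp_continuousLinearMap (fun i => innerSL ℝ (a i)) y
    fun i _ => (Real.differentiableAt_log (hx i)).fun_neg

lemma bregmanDiv_bcrpObjective {a : ι → E} (y : E) {x : E} (hx : ∀ i, ⟪a i, x⟫ ≠ 0) :
    bregmanDiv (bcrpObjective a) y x =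
      (-∑ i, Real.log ⟪a i, y⟫) - (-∑ i, Real.log ⟪a i, x⟫)
        - ⟪-∑ i, (⟪a i, x⟫)⁻¹ • a i, y - x⟫ := by
  simp only [bregmanDiv_bcrpObjective_eq_sum y hx, bregmanDiv_neg_log, inner_neg_left, sum_inner,
    real_inner_smul_left, Finset.sum_add_distrib, Finset.sum_sub_distrib, inner_sub_right (a _)]
  ring

lemma bregmanDiv_bcrpObjective_le {a : ι → E} {c : ι → ℝ} {x y : E} (hc : ∀ i, 0 < c i)
    (hx : ∀ i, c i ≤ ⟪a i, x⟫) (hy : ∀ i, c i ≤ ⟪a i, y⟫) :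
    bregmanDiv (bcrpObjective a) y x ≤ (∑ i, (‖a i‖ / c i) ^ 2) * ‖y - x‖ ^ 2 := by
  have hx₀ (i : ι) : 0 < ⟪a i, x⟫ := (hc i).trans_le (hx i)
  have hy₀ (i : ι) : 0 < ⟪a i, y⟫ := (hc i).trans_le (hy i)
  rw [bregmanDiv_bcrpObjective_eq_sum y fun i => (hx₀ i).ne', Finset.sum_mul]
  refine Finset.sum_le_sum fun i _ => ?_
  have hci : 0 < c i := hc i
  have cauchy_schwarz : ⟪a i, y - x⟫ ^ 2 ≤ (‖a i‖ * ‖y - x‖) ^ 2 :=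
    sq_le_sq' (neg_le_of_abs_le (abs_real_inner_le_norm _ _)) (real_inner_le_norm _ _)
  calc bregmanDiv (fun w => -Real.log w) ⟪a i, y⟫ ⟪a i, x⟫
      ≤ ⟪a i, y - x⟫ ^ 2 / (⟪a i, x⟫ * ⟪a i, y⟫) := by
        rw [inner_sub_right]
        exact bregmanDiv_neg_log_le (hx₀ i) (hy₀ i)
    _ ≤ (‖a i‖ * ‖y - x‖) ^ 2 / (c i * c i) := by
        gcongr
        exacts [(hx₀ i).le, hx i, hy i]
    _ = (‖a i‖ / c i) ^ 2 * ‖y - x‖ ^ 2 := by ring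

end Objective

section Entropy

variable {κ : Type*} [Fintype κ]

/-- The negative Shannon entropy `h`, on all of `ℝ^κ`; `0 * log 0 = 0` gives the usual value on
the boundary of the nonnegative orthant. -/
noncomputable def negEntropy (z : EuclideanSpace ℝ κ) : ℝ :=
  ∑ j, z j * Real.log (z j)

lemma bregmanDiv_negEntropy_eq_sum (y : EuclideanSpace ℝ κ) {x : EuclideanSpace ℝ κ}
    (hx : ∀ j, x j ≠ 0) :
    bregmanDiv negEntropy y x = ∑ j, bregmanDiv (fun w => w * Real.log w) (y j) (x j) :=
  bregmanDiv_sum_comp_continuousLinearMap (φ := fun _ w => w * Real.log w)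
    (fun j => (EuclideanSpace.proj j : EuclideanSpace ℝ κ →L[ℝ] ℝ)) y
    fun j _ => (Real.hasDerivAt_mul_log (hx j)).differentiableAt

lemma bregmanDiv_negEntropy (y : EuclideanSpace ℝ κ) {x : EuclideanSpace ℝ κ}
    (hx : ∀ j, x j ≠ 0) :
    bregmanDiv negEntropy y x =
      (∑ j, y j * Real.log (y j)) - (∑ j, x j * Real.log (x j))
        - ∑ j, (Real.log (x j) + 1) * (y j - x j) := by
  simp only [bregmanDiv_negEntropy_eq_sum y hx, bregmanDiv_mul_log _ (hx _),
    Finset.sum_sub_distrib]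

lemma norm_sub_sq_le_mul_bregmanDiv_negEntropy {x y : EuclideanSpace ℝ κ} {M : ℝ}
    (hx : ∀ j, 0 < x j) (hy : ∀ j, 0 ≤ y j) (hxM : ∀ j, x j ≤ M) (hyM : ∀ j, y j ≤ M) :
    ‖y - x‖ ^ 2 ≤ 4 * M * bregmanDiv negEntropy y x := by
  rw [EuclideanSpace.real_norm_sq_eq, bregmanDiv_negEntropy_eq_sum y fun j => (hx j).ne',
    Finset.mul_sum]
  exact Finset.sum_le_sum fun j _ =>
    sq_sub_le_mul_bregmanDiv_mul_log (hx j) (hy j) (hxM j) (hyM j)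

end Entropy

section RelativeSmoothness

open scoped Topology

variable {κ : Type*} [Fintype κ]

lemma exists_ball_half_inner_le_and_apply_le {ι : Type*} [Finite ι]
    (a : ι → EuclideanSpace ℝ κ) {x : EuclideanSpace ℝ κ} (hx : ∀ i, 0 < ⟪a i, x⟫) :
    ∃ ε > (0 : ℝ), ∀ z ∈ Metric.ball x ε,
      (∀ i, ⟪a i, x⟫ / 2 ≤ ⟪a i, z⟫) ∧ ∀ j, z j ≤ ‖x‖ + 1 := by
  have hinner : ∀ᶠ z in 𝓝 x, ∀ i, ⟪a i, x⟫ / 2 ≤ ⟪a i, z⟫ := Filter.eventually_all.2 fun i =>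
    (continuous_const.inner continuous_id).continuousAt.eventually_const_le (half_lt_self (hx i))
  have hnorm : ∀ᶠ z in 𝓝 x, ‖z‖ ≤ ‖x‖ + 1 :=
    continuous_norm.continuousAt.eventually_le_const (lt_add_one ‖x‖)
  have hcoord : ∀ᶠ z in 𝓝 x, ∀ j, z j ≤ ‖x‖ + 1 := hnorm.mono fun z hz j =>
    ((le_abs_self (z j)).trans (PiLp.norm_apply_le z j)).trans hz
  exact Metric.eventually_nhds_iff_ball.1 (hinner.and hcoord)

variable {ι : Type*} [Fintype ι]

lemma bregmanDiv_bcrpObjective_le_mul_bregmanDiv_negEntropy {a : ι → EuclideanSpace ℝ κ}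
    {c : ι → ℝ} {K M : ℝ} {x y : EuclideanSpace ℝ κ} (hc : ∀ i, 0 < c i)
    (hK : ∑ i, (‖a i‖ / c i) ^ 2 ≤ K) (hx : ∀ j, 0 < x j) (hy : ∀ j, 0 ≤ y j)
    (hcx : ∀ i, c i ≤ ⟪a i, x⟫) (hcy : ∀ i, c i ≤ ⟪a i, y⟫)
    (hxM : ∀ j, x j ≤ M) (hyM : ∀ j, y j ≤ M) :
    bregmanDiv (bcrpObjective a) y x ≤ K * (4 * M) * bregmanDiv negEntropy y x := by
  have hK₀ : 0 ≤ K := (Finset.sum_nonneg fun i _ => sq_nonneg _).trans hK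
  calc bregmanDiv (bcrpObjective a) y x
      ≤ (∑ i, (‖a i‖ / c i) ^ 2) * ‖y - x‖ ^ 2 := bregmanDiv_bcrpObjective_le hc hcx hcy
    _ ≤ K * ‖y - x‖ ^ 2 := mul_le_mul_of_nonneg_right hK (sq_nonneg _)
    _ ≤ K * (4 * M * bregmanDiv negEntropy y x) :=
        mul_le_mul_of_nonneg_left (norm_sub_sq_le_mul_bregmanDiv_negEntropy hx hy hxM hyM) hK₀
    _ = K * (4 * M) * bregmanDiv negEntropy y x := (mul_assoc _ _ _).symm

theorem stmt15_general (a : ι → EuclideanSpace ℝ κ) {x : EuclideanSpace ℝ κ}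
    (hx : ∀ i, 0 < ⟪a i, x⟫) :
    ∃ L > (0 : ℝ), ∃ ε > (0 : ℝ), ∀ z₁ ∈ Metric.ball x ε, ∀ z₂ ∈ Metric.ball x ε,
      (∀ j, 0 < z₁ j) → (∀ j, 0 ≤ z₂ j) →
        (-∑ i, Real.log ⟪a i, z₂⟫)
          ≤ (-∑ i, Real.log ⟪a i, z₁⟫)
            + ⟪-∑ i, (⟪a i, z₁⟫)⁻¹ • a i, z₂ - z₁⟫
            + L * ((∑ j, z₂ j * Real.log (z₂ j))
                - (∑ j, z₁ j * Real.log (z₁ j))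
                - ∑ j, (Real.log (z₁ j) + 1) * (z₂ j - z₁ j)) := by
  obtain ⟨ε, hε, hball⟩ := exists_ball_half_inner_le_and_apply_le a hx
  have half_pos_inner (i : ι) : 0 < ⟪a i, x⟫ / 2 := half_pos (hx i)
  set C : ℝ := ∑ i, (‖a i‖ / (⟪a i, x⟫ / 2)) ^ 2
  have hC : 0 ≤ C := Finset.sum_nonneg fun i _ => sq_nonneg _
  -- `C` vanishes when all `a i` do, hence `C + 1`.
  refine ⟨(C + 1) * (4 * (‖x‖ + 1)), mul_pos (add_pos_of_nonneg_of_pos hC one_pos) (by positivity),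
    ε, hε, fun z₁ hz₁ z₂ hz₂ hpos₁ hnonneg₂ => ?_⟩
  obtain ⟨hinner₁, hcoord₁⟩ := hball z₁ hz₁
  obtain ⟨hinner₂, hcoord₂⟩ := hball z₂ hz₂
  have h := bregmanDiv_bcrpObjective_le_mul_bregmanDiv_negEntropy half_pos_inner
    (le_add_of_nonneg_right zero_le_one : C ≤ C + 1)
    hpos₁ hnonneg₂ hinner₁ hinner₂ hcoord₁ hcoord₂
  rw [bregmanDiv_bcrpObjective z₂ fun i => ((half_pos_inner i).trans_le (hinner₁ i)).ne',
    bregmanDiv_negEntropy z₂ fun j => (hpos₁ j).ne'] at h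
  linarith

end RelativeSmoothness

/-- The BCRP objective is locally smooth relative to the negative
Shannon entropy on the probability simplex.
Let `a₁, …, a_t ∈ [0, ∞)^d`.  The objective `f_BCRP(x) := −Σᵢ log⟨aᵢ, x⟩`, with gradient
`∇f_BCRP(z) = −Σᵢ ⟨aᵢ, z⟩⁻¹ aᵢ`, is locally smooth relative to the negative Shannon
entropy `h(x) := Σⱼ xⱼ log xⱼ` (with `∇h(z) = (log zⱼ + 1)ⱼ`) on the probability simplex:
for every `x` in the simplex with `⟨aᵢ, x⟩ > 0` for all `i`, there are `L_x > 0`,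
`ε_x > 0` such that the relative-smoothness inequality holds for all `z₁, z₂` in
`B(x, ε_x)` that lie in the simplex, have strictly positive coordinates, and satisfy
`⟨aᵢ, z_l⟩ > 0` for all `i, l`. -/
theorem stmt15 (t d : ℕ) (a : Fin t → EuclideanSpace ℝ (Fin d))
    (ha : ∀ i, ∀ j, 0 ≤ a i j) :
    ∀ x : EuclideanSpace ℝ (Fin d),
      (∀ j, 0 ≤ x j) → (∑ j, x j) = 1 → (∀ i, 0 < ⟪a i, x⟫) →
      ∃ L > (0 : ℝ), ∃ ε > (0 : ℝ),
        ∀ z₁ z₂ : EuclideanSpace ℝ (Fin d),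
          z₁ ∈ Metric.ball x ε → (∀ j, 0 < z₁ j) → (∑ j, z₁ j) = 1 →
            (∀ i, 0 < ⟪a i, z₁⟫) →
          z₂ ∈ Metric.ball x ε → (∀ j, 0 < z₂ j) → (∑ j, z₂ j) = 1 →
            (∀ i, 0 < ⟪a i, z₂⟫) →
          (-∑ i, Real.log ⟪a i, z₂⟫)
            ≤ (-∑ i, Real.log ⟪a i, z₁⟫)
              + ⟪-∑ i, (⟪a i, z₁⟫)⁻¹ • a i, z₂ - z₁⟫
              + L * ((∑ j, z₂ j * Real.log (z₂ j))
                  - (∑ j, z₁ j * Real.log (z₁ j))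
                  - ∑ j, (Real.log (z₁ j) + 1) * (z₂ j - z₁ j)) := by
  intro x _ _ hx
  obtain ⟨L, hL, ε, hε, hle⟩ := stmt15_general a hx
  exact ⟨L, hL, ε, hε, fun z₁ z₂ hz₁ hpos₁ _ _ hz₂ hpos₂ _ _ =>
    hle z₁ hz₁ z₂ hz₂ hpos₁ fun j => (hpos₂ j).le⟩
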